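/- Let n ≥ 1 and let E = {j_1 < j_2 < ⋯ < j_k} ⊆ [n-1]; write the complement [n] \ E = {i_1 < i_2 < ⋯ < i_{n-k}}. Define π_E by π_E(j_s) = j_s + 1 for each j_s ∈ E and π_E(i_r) = i_{r-1} + 1 for each i_r ∉ E (with i_0 = 0). Then π_E is a permutation of [n] with excedance index set EXCi(π_E) = E and inv(π_E) = |E|, and π_E is the unique permutation π of [n] with EXCi(π) = E whose values on excedances and anti-excedances are interleaved-sorted, i.e., j_1 < π(j_1) ≤ j_2 < π(j_2) ≤ ⋯ ≤ j_k < π(j_k) and π(i_1) ≤ i_1 < π(i_2) ≤ i_2 < ⋯ < π(i_{n-k}) ≤ i_{n-k}. -/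

import Mathlib

open Finset MvPolynomial

/-- Number of inversions of a permutation of `Fin n`
(pairs `p.1 < p.2` with `π p.1 > π p.2`). -/
def inversions {n : ℕ} (π : Equiv.Perm (Fin n)) : ℕ :=
  (Finset.univ.filter fun p : Fin n × Fin n => p.1 < p.2 ∧ π p.2 < π p.1).card

/-- Excedance indices of a permutation. -/
def EXCi {n : ℕ} (π : Equiv.Perm (Fin n)) : Finset (Fin n) :=
  Finset.univ.filter fun i => i < π i

/-- Excedance values of a permutation. -/
def EXCv {n : ℕ} (π : Equiv.Perm (Fin n)) : Finset (Fin n) :=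
  (EXCi π).image π

/-- Right-to-left minima indices of a permutation. -/
def RLMi {n : ℕ} (π : Equiv.Perm (Fin n)) : Finset (Fin n) :=
  Finset.univ.filter fun i => ∀ j, i < j → π i < π j

/-- Right-to-left minima values of a permutation. -/
def RLMv {n : ℕ} (π : Equiv.Perm (Fin n)) : Finset (Fin n) :=
  (RLMi π).image π

/-- The derangements of `Fin n`, i.e. permutations with no fixed point. -/
def derangementsF (n : ℕ) : Finset (Equiv.Perm (Fin n)) :=
  Finset.univ.filter fun π => ∀ i, π i ≠ i

/-- A permutation is "interleaved-sorted" (critical) if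
`j_1 < π(j_1) ≤ j_2 < π(j_2) ≤ ⋯ ≤ j_k < π(j_k)` holds for its excedance
indices `j_1 < ⋯ < j_k` and
`π(i_1) ≤ i_1 < π(i_2) ≤ i_2 < ⋯ < π(i_{n-k}) ≤ i_{n-k}` holds for its
anti-excedance indices `i_1 < ⋯ < i_{n-k}`. -/
def InterleavedSorted {n : ℕ} (π : Equiv.Perm (Fin n)) : Prop :=
  (∀ a ∈ EXCi π, ∀ b ∈ EXCi π, a < b → π a ≤ b) ∧
  (∀ a : Fin n, a ∉ EXCi π → ∀ b : Fin n, b ∉ EXCi π → a < b → a < π b)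

/-!
List the complement of `E` as `i_1 < i_2 < ⋯`.  It cuts `Fin n` into the intervals `(i_{r-1}, i_r]`,
the first one starting at `0`, and `π_E` rotates each of them by one step: every element moves up by
one, except the last one, `i_r`, which drops to the bottom.  So each `j ∈ E` is inverted with
exactly one position, the end of its interval.  For uniqueness, the sorting conditions force a
competitor to be pointwise at least `π_E`, and two pointwise comparable permutations of a finite
partially ordered set agree: if `x ≤ τ x` for all `x`, each orbit of `τ` is an increasing cycle,
hence a point.
-/

section PartialOrder

variable {α : Type*} [PartialOrder α]

theorem perm_eq_one_of_forall_le_apply {τ : Equiv.Perm α} (hτ : IsOfFinOrder τ)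
    (h : ∀ x, x ≤ τ x) : τ = 1 := by
  obtain ⟨m, hm, hpow⟩ := isOfFinOrder_iff_pow_eq_one.1 hτ
  ext x
  refine le_antisymm ?_ (h x)
  calc τ x ≤ τ^[m - 1] (τ x) := Function.id_le_iterate_of_id_le h (m - 1) (τ x)
    _ = (τ ^ m) x := by
      rw [← Function.iterate_succ_apply, Nat.succ_eq_add_one, Nat.sub_add_cancel hm,
        Equiv.Perm.iterate_eq_pow]
    _ = x := by rw [hpow, Equiv.Perm.one_apply]

theorem perm_eq_of_forall_apply_le [Finite α] {π σ : Equiv.Perm α} (h : ∀ x, π x ≤ σ x) :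
    π = σ := by
  rw [eq_comm, ← mul_inv_eq_one]
  refine perm_eq_one_of_forall_le_apply (isOfFinOrder_of_finite _) fun x => ?_
  simpa using h (π⁻¹ x)

end PartialOrder

theorem mem_EXCi {n : ℕ} {π : Equiv.Perm (Fin n)} {i : Fin n} : i ∈ EXCi π ↔ i < π i := by
  simp [EXCi]

section InterleavedPerm

variable {n : ℕ} {E : Finset (Fin n)}

/-- For `i = i_r` in the complement of `E`, this is the value `i_{r-1} + 1` that `π_E` takes there:
the successor of the last element of the complement before `i`.  It is defined for every `i`, and is
`0` if there is no such element. -/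
def prevComplSucc (E : Finset (Fin n)) (i : Fin n) : ℕ :=
  (Finset.univ.filter fun p : Fin n => p < i ∧ p ∉ E).sup fun p => (p : ℕ) + 1

theorem prevComplSucc_le_iff {i : Fin n} {m : ℕ} :
    prevComplSucc E i ≤ m ↔ ∀ p < i, p ∉ E → (p : ℕ) < m := by
  simp [prevComplSucc]

theorem prevComplSucc_le_self (i : Fin n) : prevComplSucc E i ≤ i :=
  prevComplSucc_le_iff.2 fun _ hp _ => hp

theorem lt_prevComplSucc_of_lt_of_notMem {p i : Fin n} (hpi : p < i) (hp : p ∉ E) :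
    (p : ℕ) < prevComplSucc E i :=
  prevComplSucc_le_iff.1 le_rfl p hpi hp

theorem strictMonoOn_prevComplSucc : StrictMonoOn (prevComplSucc E) (E : Set (Fin n))ᶜ :=
  fun a ha _ _ hab => (prevComplSucc_le_self a).trans_lt (lt_prevComplSucc_of_lt_of_notMem hab ha)

theorem prevComplSucc_ne_succ {j : Fin n} (hj : j ∈ E) (i : Fin n) :
    prevComplSucc E i ≠ j + 1 := by
  intro h
  have hle : prevComplSucc E i ≤ j := prevComplSucc_le_iff.2 fun p hpi hp => by
    have hpj : p ≠ j := fun hpj => hp (hpj ▸ hj)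
    have := lt_prevComplSucc_of_lt_of_notMem hpi hp
    have := Fin.val_ne_of_ne hpj
    lia
  lia

/-- The values of the permutation `π_E`, as natural numbers: `j + 1` at `j ∈ E`, and `i_{r-1} + 1`
at the element `i_r` of the complement of `E`.  They are kept in `ℕ` because `j + 1` leaves `Fin n`
if `j ∈ E` is its last element. -/
def interleavedVal (E : Finset (Fin n)) : Fin n → ℕ :=
  E.piecewise (fun j => (j : ℕ) + 1) (prevComplSucc E)

theorem interleavedVal_of_mem {j : Fin n} (hj : j ∈ E) : interleavedVal E j = j + 1 :=
  E.piecewise_eq_of_mem _ _ hj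

theorem interleavedVal_of_notMem {i : Fin n} (hi : i ∉ E) :
    interleavedVal E i = prevComplSucc E i :=
  E.piecewise_eq_of_notMem _ _ hi

theorem interleavedVal_injective : Function.Injective (interleavedVal E) := by
  rw [interleavedVal, ← Finset.piecewise_coe, Set.injective_piecewise_iff]
  exact ⟨fun a _ b _ h => Fin.ext (Nat.succ_injective h), strictMonoOn_prevComplSucc.injOn,
    fun j hj i _ => (prevComplSucc_ne_succ hj i).symm⟩

theorem lt_interleavedVal_iff {i : Fin n} : (i : ℕ) < interleavedVal E i ↔ i ∈ E := by
  by_cases hi : i ∈ E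
  · simp [interleavedVal_of_mem hi, hi]
  · simp [interleavedVal_of_notMem hi, hi, prevComplSucc_le_self i]

theorem interleavedVal_lt (hE : ∀ j ∈ E, (j : ℕ) + 1 < n) (i : Fin n) :
    interleavedVal E i < n := by
  by_cases hi : i ∈ E
  · exact interleavedVal_of_mem hi ▸ hE i hi
  · exact interleavedVal_of_notMem hi ▸ (prevComplSucc_le_self i).trans_lt i.isLt

theorem lt_interleavedVal_of_lt_of_notMem {p q : Fin n} (hpq : p < q) (hp : p ∉ E) :
    (p : ℕ) < interleavedVal E q := by
  by_cases hq : q ∈ E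
  · exact Fin.lt_def.1 hpq |>.trans (lt_interleavedVal_iff.2 hq)
  · exact interleavedVal_of_notMem hq ▸ lt_prevComplSucc_of_lt_of_notMem hpq hp

theorem lt_and_interleavedVal_lt_iff_isLeast {p q : Fin n} :
    p < q ∧ interleavedVal E q < interleavedVal E p ↔
      p ∈ E ∧ IsLeast {r | p < r ∧ r ∉ E} q := by
  constructor
  · rintro ⟨hpq, hinv⟩
    have hp : p ∈ E := by
      by_contra hp
      exact hp (lt_interleavedVal_iff.1 ((lt_interleavedVal_of_lt_of_notMem hpq hp).trans hinv))
    have hval : interleavedVal E q ≤ p :=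
      Nat.lt_succ_iff.1 (hinv.trans_eq (interleavedVal_of_mem hp))
    have hq : q ∉ E := fun hq =>
      (hval.trans_lt hpq).not_gt (lt_interleavedVal_iff.2 hq)
    refine ⟨hp, ⟨hpq, hq⟩, fun r ⟨hpr, hr⟩ => not_lt.1 fun hrq => ?_⟩
    exact (hval.trans_lt hpr).not_gt (lt_interleavedVal_of_lt_of_notMem hrq hr)
  · rintro ⟨hp, ⟨hpq, hq⟩, hmin⟩
    have hle : interleavedVal E q ≤ interleavedVal E p := by
      rw [interleavedVal_of_mem hp, interleavedVal_of_notMem hq, prevComplSucc_le_iff]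
      intro r hrq hr
      exact Nat.lt_succ_iff.2 (not_lt.1 fun hpr => hrq.not_ge (hmin ⟨hpr, hr⟩))
    exact ⟨hpq, hle.lt_of_ne (interleavedVal_injective.ne hpq.ne')⟩

theorem exists_isLeast_lt_notMem (hE : ∀ j ∈ E, (j : ℕ) + 1 < n) {p : Fin n}
    (hp : (p : ℕ) + 1 < n) : ∃ q, IsLeast {r | p < r ∧ r ∉ E} q := by
  let last : Fin n := ⟨n - 1, by lia⟩
  have hlast : last ∉ E := fun h => by
    have : n - 1 + 1 < n := hE last h
    lia
  have hlt : p < last := Fin.lt_def.2 (Nat.lt_sub_of_add_lt hp)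
  simp only [← minimal_iff_isLeast]
  exact exists_minimal_of_wellFoundedLT _ ⟨last, hlt, hlast⟩

/-- The permutation `π_E`, the rotation by one step of every interval `(i_{r-1}, i_r]` between
consecutive elements of the complement of `E`. -/
noncomputable def interleavedPerm (E : Finset (Fin n)) (hE : ∀ j ∈ E, (j : ℕ) + 1 < n) :
    Equiv.Perm (Fin n) :=
  Equiv.ofBijective (fun i => ⟨interleavedVal E i, interleavedVal_lt hE i⟩) <|
    Finite.injective_iff_bijective.1 fun _ _ h => interleavedVal_injective (Fin.ext_iff.1 h)

variable (hE : ∀ j ∈ E, (j : ℕ) + 1 < n)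

theorem val_interleavedPerm (i : Fin n) : (interleavedPerm E hE i : ℕ) = interleavedVal E i :=
  rfl

theorem EXCi_interleavedPerm : EXCi (interleavedPerm E hE) = E := by
  ext i
  rw [mem_EXCi, Fin.lt_def, val_interleavedPerm, lt_interleavedVal_iff]

theorem inversions_interleavedPerm : inversions (interleavedPerm E hE) = E.card := by
  have hinv (p q : Fin n) : (p < q ∧ interleavedPerm E hE q < interleavedPerm E hE p) ↔
      p ∈ E ∧ IsLeast {r | p < r ∧ r ∉ E} q := by
    rw [← lt_and_interleavedVal_lt_iff_isLeast, Fin.lt_def (b := interleavedPerm E hE p),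
      val_interleavedPerm, val_interleavedPerm]
  refine Finset.card_nbij Prod.fst ?_ ?_ ?_
  · rintro ⟨p, q⟩ hpq
    exact ((hinv p q).1 (Finset.mem_filter.1 hpq).2).1
  · rintro ⟨p, q⟩ hpq ⟨p', q'⟩ hpq' (rfl : p = p')
    have hq := ((hinv p q).1 (Finset.mem_filter.1 hpq).2).2
    have hq' := ((hinv p q').1 (Finset.mem_filter.1 hpq').2).2
    rw [hq.unique hq']
  · intro p hp
    obtain ⟨q, hq⟩ := exists_isLeast_lt_notMem hE (hE p hp)
    exact ⟨(p, q), Finset.mem_filter.2 ⟨Finset.mem_univ _, (hinv p q).2 ⟨hp, hq⟩⟩, rfl⟩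

theorem interleavedSorted_interleavedPerm : InterleavedSorted (interleavedPerm E hE) := by
  rw [InterleavedSorted, EXCi_interleavedPerm]
  refine ⟨fun a ha b _ hab => ?_, fun a ha b _ hab => lt_interleavedVal_of_lt_of_notMem hab ha⟩
  rw [Fin.le_def, val_interleavedPerm, interleavedVal_of_mem ha]
  exact hab

theorem eq_interleavedPerm {π : Equiv.Perm (Fin n)} (hexc : ∀ j ∈ E, j < π j)
    (hanti : ∀ p ∉ E, ∀ i ∉ E, p < i → p < π i) : π = interleavedPerm E hE := by
  refine (perm_eq_of_forall_apply_le fun i => ?_).symm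
  rw [Fin.le_def, val_interleavedPerm]
  by_cases hi : i ∈ E
  · exact interleavedVal_of_mem hi ▸ hexc i hi
  · rw [interleavedVal_of_notMem hi, prevComplSucc_le_iff]
    exact fun p hpi hp => hanti p hp i hi hpi

end InterleavedPerm

/-- Here `Fin n` represents `[n]` via `i ↦ i + 1`.  The hypothesis `hE`
says `E ⊆ [n-1]`.  The second conjunct expresses `π(i_r) = i_{r-1} + 1`
(with `i_0 = 0`): for an anti-excedance position `i`, the (0-based) value of
`π` at `i` is one more than the largest element of the complement of `E`
below `i`, or `0` if there is none. -/
theorem stmt18 (n : ℕ) (hn : 1 ≤ n) (E : Finset (Fin n))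
    (hE : ∀ j ∈ E, (j : ℕ) + 1 < n) :
    ∃ π : Equiv.Perm (Fin n),
      (∀ j ∈ E, (π j : ℕ) = (j : ℕ) + 1) ∧
      (∀ i : Fin n, i ∉ E →
        (π i : ℕ) =
          (Finset.univ.filter fun p : Fin n => p < i ∧ p ∉ E).sup
            (fun p => (p : ℕ) + 1)) ∧
      EXCi π = E ∧
      inversions π = E.card ∧
      InterleavedSorted π ∧
      (∀ π' : Equiv.Perm (Fin n), EXCi π' = E → InterleavedSorted π' → π' = π) := by
  refine ⟨interleavedPerm E hE, fun j hj => interleavedVal_of_mem hj,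
    fun i hi => interleavedVal_of_notMem hi, EXCi_interleavedPerm hE,
    inversions_interleavedPerm hE, interleavedSorted_interleavedPerm hE, ?_⟩
  rintro π rfl hsorted
  exact eq_interleavedPerm hE (fun _ => mem_EXCi.1) hsorted.2
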